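/- Let f(n) = b_d·n^d + ... + b_0 be a polynomial with integer coefficients such that b_d > 0, gcd(b_d, ..., b_0) = 1, and f(p) is a positive integer for every prime p. Then there exist constants c_1, c_2 > 0 depending only on f such that for every real x ≥ 2 and every real t > 0, #{p ≤ x : f(p)/φ(f(p)) > t} ≤ c_1 · exp(−exp(c_2·t)) · π(x), where p runs over primes and π(x) denotes the number of primes not exceeding x. -/

import Mathlib

lemma aux_mertens1 (N : ℕ) (hN : 1 ≤ N) :
    ∑ q ∈ Nat.primesLE N, Real.log q / q ≤ 2 * Real.log N := by
  have h1 : ∏ q ∈ Nat.primesLE N, q ^ (N / q) ∣ Nat.factorial N := by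
    apply Finset.prod_dvd_of_isRelPrime
    · intro a ha b hb hab
      have ha' := Nat.prime_of_mem_primesLE (Finset.mem_coe.1 ha)
      have hb' := Nat.prime_of_mem_primesLE (Finset.mem_coe.1 hb)
      exact Nat.coprime_iff_isRelPrime.1 (Nat.Coprime.pow _ _ ((Nat.coprime_primes ha' hb').2 hab))
    · intro q hq
      have hq' := Nat.prime_of_mem_primesLE hq
      have hqN := (Nat.mem_primesLE.1 hq).1
      have hl : 1 ≤ Nat.log q N := Nat.log_pos hq'.one_lt hqN
      rw [hq'.pow_dvd_factorial_iff (Nat.lt_succ_self _)]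
      have := Finset.single_le_sum (f := fun i => N / q ^ i)
        (s := Finset.Ico 1 (Nat.log q N).succ) (fun i _ => Nat.zero_le _)
        (Finset.mem_Ico.2 ⟨le_refl 1, by omega⟩)
      simpa using this
  have h2 : ∏ q ∈ Nat.primesLE N, q ^ (N / q) ≤ N ^ N :=
    (Nat.le_of_dvd (Nat.factorial_pos N) h1).trans (Nat.factorial_le_pow N)
  have h3 : ∑ q ∈ Nat.primesLE N, ((N / q : ℕ) : ℝ) * Real.log q ≤ N * Real.log N := by
    have h4 : ((∏ q ∈ Nat.primesLE N, q ^ (N / q) : ℕ) : ℝ) ≤ ((N ^ N : ℕ) : ℝ) := by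
      exact_mod_cast h2
    have hpos : (0 : ℝ) < ((∏ q ∈ Nat.primesLE N, q ^ (N / q) : ℕ) : ℝ) := by
      have : 0 < ∏ q ∈ Nat.primesLE N, q ^ (N / q) :=
        Finset.prod_pos fun q hq => pow_pos (Nat.prime_of_mem_primesLE hq).pos _
      exact_mod_cast this
    have h5 := Real.log_le_log hpos h4
    push_cast at h5
    rw [Real.log_prod, Real.log_pow] at h5
    · simpa [Real.log_pow] using h5
    · intro q hq
      have := (Nat.prime_of_mem_primesLE hq).pos
      positivity
  have hN' : (0 : ℝ) < N := by exact_mod_cast hN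
  have h6 : ∑ q ∈ Nat.primesLE N, (N : ℝ) / 2 * (Real.log q / q) ≤ N * Real.log N := by
    refine le_trans (Finset.sum_le_sum ?_) h3
    intro q hq
    have hq' := Nat.prime_of_mem_primesLE hq
    have hqN := (Nat.mem_primesLE.1 hq).1
    have hq0 : (0 : ℝ) < q := by exact_mod_cast hq'.pos
    have hlog : 0 ≤ Real.log q := Real.log_natCast_nonneg q
    have : (N : ℝ) / 2 / q ≤ ((N / q : ℕ) : ℝ) := by
      rw [div_le_iff₀ hq0, div_le_iff₀ two_pos]
      have h7 : N ≤ N / q * q * 2 := by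
        have h8 := Nat.div_add_mod N q
        have h9 := Nat.mod_lt N hq'.pos
        have h10 : 1 ≤ N / q := Nat.div_pos hqN hq'.pos
        nlinarith
      exact_mod_cast h7
    calc (N : ℝ) / 2 * (Real.log q / q) = (N : ℝ) / 2 / q * Real.log q := by ring
      _ ≤ _ := by gcongr
  rw [← Finset.mul_sum] at h6
  have : (N : ℝ) * (∑ q ∈ Nat.primesLE N, Real.log q / q) ≤ N * (2 * Real.log N) := by linarith
  exact le_of_mul_le_mul_left this hN'

lemma aux_mertens2 : ∃ C y₀ : ℝ, 0 < C ∧ 3 ≤ y₀ ∧ ∀ y : ℝ, y₀ ≤ y →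
    ∏ q ∈ Nat.primesLE ⌊y⌋₊, ((q : ℝ) / (q - 1)) ≤ C * Real.log y := by
  have h0 := tendsto_sub_mul_tsum_nat_rpow.eventually (gt_mem_nhds (show (1 : ℝ) < 2 by norm_num))
  rw [eventually_nhdsWithin_iff, Metric.eventually_nhds_iff] at h0
  obtain ⟨ε, hε, h0⟩ := h0
  refine ⟨2 * Real.exp 4, max 3 (Real.exp (2 / ε)), by positivity, le_max_left _ _, ?_⟩
  intro y hy
  have hy3 : 3 ≤ y := (le_max_left _ _).trans hy
  have hly : 2 / ε ≤ Real.log y := by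
    rw [Real.le_log_iff_exp_le (by linarith)]
    exact (le_max_right _ _).trans hy
  have hlpos : 0 < Real.log y := lt_of_lt_of_le (by positivity) hly
  set L := Real.log y with hL
  set s : ℝ := 1 + 1 / L with hs
  have hs1 : 1 < s := by rw [hs]; have : 0 < 1 / L := by positivity
                         linarith
  have hz : ∑' n : ℕ, 1 / (n : ℝ) ^ s ≤ 2 * L := by
    have hd : dist s 1 < ε := by
      rw [Real.dist_eq, hs]
      have : 0 < 1 / L := by positivity
      rw [add_sub_cancel_left, abs_of_pos this, div_lt_iff₀ hlpos]
      rw [div_le_iff₀ hε] at hly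
      linarith
    have h1 := h0 hd hs1
    have e : s - 1 = 1 / L := by rw [hs]; ring
    rw [e, one_div_mul_eq_div, div_lt_iff₀ hlpos] at h1
    exact h1.le
  let f : ℕ →* ℝ :=
    { toFun := fun n => 1 / (n : ℝ) ^ s
      map_one' := by simp
      map_mul' := by
        intro a b
        push_cast
        rw [Real.mul_rpow (by positivity) (by positivity)]
        rw [one_div_mul_one_div] }
  have hf : ∀ n, f n = 1 / (n : ℝ) ^ s := fun n => rfl
  have hsum : Summable f := by
    have := Real.summable_one_div_nat_rpow.2 hs1
    exact this
  have hE := EulerProduct.prod_primesBelow_geometric_eq_tsum_smoothNumbers hsum (⌊y⌋₊ + 1)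
  have hle : ∑' m : (⌊y⌋₊ + 1).smoothNumbers, f m ≤ 2 * L := by
    refine le_trans ?_ hz
    exact Summable.tsum_subtype_le f _ (fun n => by rw [hf]; positivity) hsum
  rw [← hE] at hle
  have key : ∀ q ∈ Nat.primesLE ⌊y⌋₊, (q : ℝ) / (q - 1) ≤
      (1 - f q)⁻¹ * Real.exp (2 / L * (Real.log q / q)) := by
    intro q hq
    have hq' := Nat.prime_of_mem_primesLE hq
    have hq2 : (2 : ℝ) ≤ q := by exact_mod_cast hq'.two_le
    have hq0 : (0 : ℝ) < q := by linarith
    have hfq : f q = (q : ℝ)⁻¹ * Real.exp (-(Real.log q / L)) := by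
      rw [hf, hs, one_div, ← Real.rpow_neg hq0.le, Real.rpow_def_of_pos hq0, ← Real.exp_log hq0,
        ← Real.exp_neg, ← Real.exp_add, Real.exp_log hq0]
      congr 1; field_simp; ring
    set u := Real.log q / L with hu
    have hu0 : 0 ≤ u := div_nonneg (Real.log_natCast_nonneg q) hlpos.le
    have he : 1 - u ≤ Real.exp (-u) := by have := Real.add_one_le_exp (-u); linarith
    have he1 : Real.exp (-u) ≤ 1 := by rw [Real.exp_le_one_iff]; linarith
    have hfq1 : f q ≤ (q : ℝ)⁻¹ := by
      rw [hfq]; exact mul_le_of_le_one_right (by positivity) he1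
    have hinv : (q : ℝ)⁻¹ ≤ 1 / 2 := by
      rw [inv_le_comm₀ hq0 (by norm_num)]; linarith
    have hpos : 0 < 1 - f q := by linarith
    rw [inv_mul_eq_div, div_le_div_iff₀ (by linarith) hpos]
    have hexp : 1 + 2 * u / q ≤ Real.exp (2 / L * (Real.log q / q)) := by
      have := Real.add_one_le_exp (2 / L * (Real.log q / q))
      have e : 2 / L * (Real.log q / q) = 2 * u / q := by rw [hu]; ring
      rw [e] at this ⊢; linarith
    have h1 : (q : ℝ) * (1 - f q) ≤ q - 1 + u := by
      rw [hfq]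
      have : (q : ℝ) * (1 - (q : ℝ)⁻¹ * Real.exp (-u)) = q - Real.exp (-u) := by
        field_simp
      rw [this]; linarith
    refine h1.trans ?_
    calc (q : ℝ) - 1 + u ≤ (1 + 2 * u / q) * (q - 1) := by
          have : (1 + 2 * u / q) * ((q : ℝ) - 1) = q - 1 + 2 * u - 2 * u / q := by field_simp; ring
          rw [this]
          have : 2 * u / q ≤ u := by rw [div_le_iff₀ hq0]; nlinarith
          linarith
      _ ≤ _ := by gcongr; linarith
  have hfl : 1 ≤ ⌊y⌋₊ := Nat.one_le_floor_iff _ |>.2 (by linarith)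
  calc ∏ q ∈ Nat.primesLE ⌊y⌋₊, ((q : ℝ) / (q - 1))
      ≤ ∏ q ∈ Nat.primesLE ⌊y⌋₊, ((1 - f q)⁻¹ * Real.exp (2 / L * (Real.log q / q))) := by
        apply Finset.prod_le_prod _ key
        intro q hq
        have hq2 : (2 : ℝ) ≤ q := by exact_mod_cast (Nat.prime_of_mem_primesLE hq).two_le
        exact div_nonneg (by linarith) (by linarith)
    _ = (∏ q ∈ Nat.primesLE ⌊y⌋₊, (1 - f q)⁻¹) *
          Real.exp (2 / L * ∑ q ∈ Nat.primesLE ⌊y⌋₊, (Real.log q / q)) := by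
        rw [Finset.prod_mul_distrib, ← Real.exp_sum, Finset.mul_sum]
    _ ≤ (2 * L) * Real.exp 4 := by
        have h1 := aux_mertens1 ⌊y⌋₊ hfl
        have h2 : Real.log ⌊y⌋₊ ≤ L :=
          Real.log_le_log (by exact_mod_cast hfl) (Nat.floor_le (by linarith))
        have h3 : 2 / L * ∑ q ∈ Nat.primesLE ⌊y⌋₊, (Real.log q / q) ≤ 4 := by
          rw [div_mul_eq_mul_div, div_le_iff₀ hlpos]; linarith
        refine mul_le_mul hle (Real.exp_le_exp.2 h3) (Real.exp_pos _).le (by positivity)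
    _ = _ := by ring

lemma aux_pi_lower (n : ℕ) (hn : 2 ≤ n) :
    (1 / 10 : ℝ) * (n / Real.log n) ≤ Nat.primeCounting n := by
  refine le_trans ?_ (Chebyshev.pi_ge n)
  have hn' : (2 : ℝ) ≤ n := by exact_mod_cast hn
  have hl : 0 < Real.log n := Real.log_pos (by linarith)
  rw [← mul_div_assoc]
  apply div_le_div_of_nonneg_right _ hl.le
  have h1 : Real.log (n + 1) ≤ Real.log 3 + (n - 2) / 3 := by
    have e : ((n : ℝ) + 1) = 3 * ((n + 1) / 3) := by ring
    rw [e, Real.log_mul (by norm_num) (by positivity)]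
    have := Real.log_le_sub_one_of_pos (show (0 : ℝ) < (n + 1) / 3 by positivity)
    linarith
  have h2 : Real.log 3 ≤ 2 * Real.log 2 - 1 / 4 := by
    have : 2 * Real.log 2 = Real.log 3 + Real.log (4 / 3) := by
      rw [← Real.log_mul (by norm_num) (by norm_num)]
      rw [show (3 : ℝ) * (4 / 3) = 2 ^ 2 by norm_num, Real.log_pow]; norm_num
    have := Real.one_sub_inv_le_log_of_pos (show (0 : ℝ) < 4 / 3 by norm_num)
    norm_num at this
    linarith
  have := Real.log_two_gt_d9
  nlinarith

lemma aux_pi_upper (n : ℕ) (hn : 2 ≤ n) :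
    (Nat.primeCounting n : ℝ) ≤ 6 * (n / Real.log n) := by
  have hn' : (2 : ℝ) ≤ n := by exact_mod_cast hn
  have hl : 0 < Real.log n := Real.log_pos (by linarith)
  have h := Chebyshev.pi_le_log4_mul_div (show (1 : ℝ) < n by linarith)
  rw [Nat.floor_natCast, Real.log_sqrt (by linarith)] at h
  refine h.trans ?_
  have h1 : √(n : ℝ) ≤ 2 * (n / Real.log n) := by
    rw [← mul_div_assoc, le_div_iff₀ hl]
    have h2 : Real.log n ≤ 2 * √(n : ℝ) := by
      have := Real.log_le_sub_one_of_pos (show 0 < √(n : ℝ) by positivity)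
      rw [Real.log_sqrt (by linarith)] at this
      linarith
    have h3 := Real.mul_self_sqrt (show (0 : ℝ) ≤ n by linarith)
    nlinarith [Real.sqrt_nonneg (n : ℝ)]
  have h4 : Real.log 4 ≤ 2 := by
    have : Real.log 4 = 2 * Real.log 2 := by
      rw [show (4 : ℝ) = 2 ^ 2 by norm_num, Real.log_pow]; norm_num
    have := Real.log_two_lt_d9
    linarith
  have h5 : Real.log 4 * n / (Real.log n / 2) ≤ 4 * (n / Real.log n) := by
    have : Real.log 4 * n / (Real.log n / 2) = (2 * Real.log 4) * (n / Real.log n) := by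
      field_simp
    rw [this]
    have : 0 ≤ (n : ℝ) / Real.log n := by positivity
    nlinarith
  linarith

lemma aux_fact_dvd (Q N a : ℕ) :
    Nat.factorial N ∣ Q ^ N * ∏ k ∈ Finset.range N, (Q * k + a) := by
  rw [Nat.dvd_iff_prime_pow_dvd_dvd]
  intro r k hr hk
  have : Fact r.Prime := ⟨hr⟩
  by_cases hrQ : r ∣ Q
  · rcases Nat.eq_zero_or_pos N with rfl | hN
    · simpa using hk
    have h1 := sub_one_mul_padicValNat_factorial_lt_of_ne_zero r hN.ne'
    have h2 : k ≤ padicValNat r (Nat.factorial N) :=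
      (padicValNat_dvd_iff_le (Nat.factorial_ne_zero N)).1 hk
    have h3 : 1 ≤ r - 1 := by have := hr.two_le; omega
    have h4 : k ≤ N := by nlinarith
    exact Dvd.dvd.mul_right ((pow_dvd_pow r h4).trans (pow_dvd_pow_of_dvd hrQ N)) _
  · have hc : Nat.Coprime Q (r ^ k) :=
      (Nat.Coprime.pow_left k ((Nat.Prime.coprime_iff_not_dvd hr).2 hrQ)).symm
    have : NeZero (r ^ k) := ⟨(pow_pos hr.pos k).ne'⟩
    apply Dvd.dvd.mul_left
    rw [← CharP.cast_eq_zero_iff (ZMod (r ^ k))]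
    set b : ℕ := ((Q : ZMod (r ^ k))⁻¹ * a).val with hb
    have hQb : (Q : ZMod (r ^ k)) * b = a := by
      rw [hb, ZMod.natCast_val, ZMod.cast_id', id, ← mul_assoc, ZMod.coe_mul_inv_eq_one Q hc,
        one_mul]
    have hd : (((b.ascFactorial N : ℕ)) : ZMod (r ^ k)) = 0 := by
      rw [CharP.cast_eq_zero_iff (ZMod (r ^ k)) (r ^ k)]
      exact hk.trans (Nat.factorial_dvd_ascFactorial b N)
    rw [Nat.ascFactorial_eq_prod_range] at hd
    push_cast at hd ⊢
    have : ∀ i ∈ Finset.range N, ((Q : ZMod (r ^ k)) * i + a) = Q * (b + i) := by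
      intro i _
      rw [← hQb]; ring
    rw [Finset.prod_congr rfl this, Finset.prod_mul_distrib, hd, mul_zero]

lemma aux_prod_primes (Q N a : ℕ) (ha : 1 ≤ a) (haQ : a ≤ Q) (T : Finset ℕ)
    (hT : ∀ p ∈ T, p.Prime ∧ N < p ∧ ∃ k < N, p = Q * k + a) :
    ∏ p ∈ T, p ≤ Q ^ (2 * N) := by
  have h1 := aux_fact_dvd Q N a
  set P := ∏ k ∈ Finset.range N, (Q * k + a) with hP
  have h2 : ∏ p ∈ T, p ∣ P := by
    apply Finset.prod_dvd_of_isRelPrime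
    · intro p hp q hq hpq
      exact Nat.coprime_iff_isRelPrime.1
        ((Nat.coprime_primes (hT p hp).1 (hT q hq).1).2 hpq)
    · intro p hp
      obtain ⟨_, _, k, hk, rfl⟩ := hT p hp
      exact Finset.dvd_prod_of_mem (fun k => Q * k + a) (Finset.mem_range.2 hk)
  have h3 : Nat.Coprime (∏ p ∈ T, p) (Nat.factorial N) := by
    apply Nat.Coprime.prod_left
    intro p hp
    obtain ⟨hpp, hpN, _⟩ := hT p hp
    rw [Nat.Prime.coprime_iff_not_dvd hpp, hpp.dvd_factorial]
    omega
  have h4 : (∏ p ∈ T, p) * Nat.factorial N ∣ Q ^ N * P :=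
    Nat.Coprime.mul_dvd_of_dvd_of_dvd h3 (h2.mul_left _) h1
  have h5 : P ≤ Q ^ N * Nat.factorial N := by
    rw [hP, ← Finset.prod_range_add_one_eq_factorial]
    calc ∏ k ∈ Finset.range N, (Q * k + a) ≤ ∏ k ∈ Finset.range N, (Q * (k + 1)) := by
          apply Finset.prod_le_prod' ; intro i _; rw [mul_add]; omega
      _ = _ := by rw [Finset.prod_mul_distrib]; simp
  have hPpos : 0 < Q ^ N * P := by
    apply Nat.mul_pos (pow_pos (by omega) _)
    exact Finset.prod_pos fun k _ => by omega
  have h6 := Nat.le_of_dvd hPpos h4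
  have h7 : (∏ p ∈ T, p) * Nat.factorial N ≤ Q ^ (2 * N) * Nat.factorial N := by
    refine h6.trans ?_
    calc Q ^ N * P ≤ Q ^ N * (Q ^ N * Nat.factorial N) := Nat.mul_le_mul_left _ h5
      _ = _ := by ring
  exact Nat.le_of_mul_le_mul_right h7 (Nat.factorial_pos N)

lemma aux_BT (n Q a : ℕ) (hn : 2 ≤ n) (hQ : 1 ≤ Q) (hQn : Q ^ 2 ≤ n) :
    (((Nat.primesLE n).filter (fun p => p % Q = a % Q)).card : ℝ) ≤
      24 * (n / Real.log n) / √(Q : ℝ) := by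
  obtain ⟨a', ha1, haQ, haa⟩ : ∃ a', 1 ≤ a' ∧ a' ≤ Q ∧ a' % Q = a % Q := by
    rcases Nat.eq_zero_or_pos (a % Q) with h | h
    · exact ⟨Q, hQ, le_refl _, by rw [h, Nat.mod_self]⟩
    · exact ⟨a % Q, h, (Nat.mod_lt a hQ).le, Nat.mod_mod a Q⟩
  set N := n / Q + 1 with hN
  set T := (Nat.primesLE n).filter (fun p => p % Q = a % Q ∧ N < p) with hT
  have hsub : (Nat.primesLE n).filter (fun p => p % Q = a % Q) ⊆ T ∪ Nat.primesLE N := by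
    intro p hp
    rw [Finset.mem_filter, Nat.mem_primesLE] at hp
    rw [Finset.mem_union, hT, Finset.mem_filter, Nat.mem_primesLE, Nat.mem_primesLE]
    by_cases h : N < p
    · left; exact ⟨hp.1, hp.2, h⟩
    · right; exact ⟨by omega, hp.1.2⟩
  have hcard : (((Nat.primesLE n).filter (fun p => p % Q = a % Q)).card : ℝ) ≤
      T.card + Nat.primeCounting N := by
    rw [← Nat.primesLE_card_eq_primeCounting]
    exact_mod_cast (Finset.card_le_card hsub).trans (Finset.card_union_le _ _)
  have hQN : Q ≤ n / Q := by rw [Nat.le_div_iff_mul_le hQ]; nlinarith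
  have hprod : ∏ p ∈ T, p ≤ Q ^ (2 * N) := by
    apply aux_prod_primes Q N a' ha1 haQ T
    intro p hp
    rw [hT, Finset.mem_filter, Nat.mem_primesLE] at hp
    obtain ⟨⟨hpn, hpp⟩, hmod, hNp⟩ := hp
    refine ⟨hpp, hNp, ?_⟩
    have hap : a' ≤ p := by omega
    have hd : Q ∣ p - a' := by
      rw [← Nat.modEq_iff_dvd' hap]
      exact haa.trans hmod.symm
    obtain ⟨k, hk⟩ := hd
    refine ⟨k, ?_, by omega⟩
    have : k ≤ n / Q := by
      rw [Nat.le_div_iff_mul_le hQ, mul_comm]; omega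
    omega
  have hn' : (2 : ℝ) ≤ n := by exact_mod_cast hn
  have hl : 0 < Real.log n := Real.log_pos (by linarith)
  have hQ' : (1 : ℝ) ≤ Q := by exact_mod_cast hQ
  have hlQ : 0 ≤ Real.log Q := Real.log_natCast_nonneg Q
  have hN2 : 2 ≤ N := by omega
  have hnN : n ≤ N ^ 2 := by
    have h1 := Nat.div_add_mod n Q
    have h2 := Nat.mod_lt n hQ
    have h3 : n < Q * N := by rw [hN, mul_add]; omega
    have h4 : Q ≤ N := by omega
    nlinarith
  have hNl : Real.log n / 2 ≤ Real.log N := by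
    have : Real.log n ≤ Real.log ((N : ℝ) ^ 2) :=
      Real.log_le_log (by linarith) (by exact_mod_cast hnN)
    rw [Real.log_pow] at this
    push_cast at this
    linarith
  have hNle : (N : ℝ) ≤ 2 * (n / Q) := by
    have h1 : ((n / Q : ℕ) : ℝ) ≤ n / Q := Nat.cast_div_le
    have h2 : (1 : ℝ) ≤ n / Q := by
      rw [le_div_iff₀ (by linarith), one_mul]
      have : Q ≤ n := by nlinarith
      exact_mod_cast this
    rw [hN]; push_cast; linarith
  have hTc : (T.card : ℝ) * (Real.log n / 2) ≤ 2 * N * Real.log Q := by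
    have h1 : N ^ T.card ≤ Q ^ (2 * N) := by
      refine le_trans ?_ hprod
      apply Finset.pow_card_le_prod
      intro p hp
      rw [hT, Finset.mem_filter] at hp
      exact hp.2.2.le
    have h2 : Real.log ((N : ℝ) ^ T.card) ≤ Real.log ((Q : ℝ) ^ (2 * N)) :=
      Real.log_le_log (by positivity) (by exact_mod_cast h1)
    rw [Real.log_pow, Real.log_pow] at h2
    push_cast at h2
    refine le_trans ?_ h2
    gcongr
  have hTc' : (T.card : ℝ) ≤ 8 * (n / Real.log n) * (Real.log Q / Q) := by
    have h1 : (T.card : ℝ) * (Real.log n / 2) ≤ 2 * (2 * (n / Q)) * Real.log Q := by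
      refine hTc.trans ?_
      gcongr
    have h2 : (T.card : ℝ) ≤ (2 * (2 * (n / Q)) * Real.log Q) / (Real.log n / 2) := by
      rw [le_div_iff₀ (by positivity)]; exact h1
    refine h2.trans (le_of_eq ?_)
    field_simp
    ring
  have hpiN : (Nat.primeCounting N : ℝ) ≤ 24 * (n / Real.log n) * (1 / Q) := by
    refine (aux_pi_upper N hN2).trans ?_
    calc 6 * ((N : ℝ) / Real.log N) ≤ 6 * (2 * (n / Q) / (Real.log n / 2)) := by gcongr
      _ = _ := by field_simp; norm_num
  have hs := Real.log_le_sub_one_of_pos (show 0 < √(Q : ℝ) by positivity)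
  rw [Real.log_sqrt (by linarith)] at hs
  have hs1 : 1 ≤ √(Q : ℝ) := Real.one_le_sqrt.2 hQ'
  have hfin : 8 * (Real.log Q / Q) + 24 * (1 / Q) ≤ 24 / √(Q : ℝ) := by
    have e : 24 / √(Q : ℝ) = 24 * √(Q : ℝ) / Q := by
      have := Real.mul_self_sqrt (show (0 : ℝ) ≤ Q by linarith)
      rw [div_eq_div_iff (by positivity) (by positivity)]
      rw [mul_assoc, this]
    rw [e]
    have : 8 * (Real.log Q / Q) + 24 * (1 / Q) = (8 * Real.log Q + 24) / Q := by ring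
    rw [this]
    gcongr
    linarith
  have hX : 0 ≤ (n : ℝ) / Real.log n := by positivity
  calc _ ≤ _ := hcard
    _ ≤ (n / Real.log n) * (8 * (Real.log Q / Q) + 24 * (1 / Q)) := by linarith
    _ ≤ (n / Real.log n) * (24 / √(Q : ℝ)) := by gcongr
    _ = _ := by ring

lemma aux_roots (f : Polynomial ℤ) (hcont : f.content = 1) (q : ℕ) (hq : q.Prime) :
    ((Finset.range q).filter (fun a : ℕ => (q : ℤ) ∣ f.eval (a : ℤ))).card ≤ f.natDegree := by
  have : Fact q.Prime := ⟨hq⟩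
  set g := f.map (Int.castRingHom (ZMod q)) with hg
  have hg0 : g ≠ 0 := by
    intro h
    have : (q : ℤ) ∣ f.content := by
      rw [Polynomial.dvd_content_iff_C_dvd, Polynomial.C_dvd_iff_dvd_coeff]
      intro i
      have h1 : g.coeff i = 0 := by rw [h]; simp
      rw [hg, Polynomial.coeff_map] at h1
      exact (ZMod.intCast_zmod_eq_zero_iff_dvd _ q).1 (by simpa using h1)
    rw [hcont] at this
    have h2 := Int.natCast_dvd_natCast.1 (by simpa using this : (q : ℤ) ∣ ((1 : ℕ) : ℤ))
    exact hq.one_lt.ne' (Nat.dvd_one.1 h2)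
  classical
  have h1 : ((Finset.range q).filter (fun a : ℕ => (q : ℤ) ∣ f.eval (a : ℤ))).card ≤
      g.roots.toFinset.card := by
    apply Finset.card_le_card_of_injOn (fun a : ℕ => (a : ZMod q))
    · intro a ha
      simp only [Finset.coe_filter, Finset.mem_range, Set.mem_ofPred_eq] at ha
      simp only [Finset.mem_coe, Multiset.mem_toFinset]
      rw [Polynomial.mem_roots hg0, Polynomial.IsRoot, hg, Polynomial.eval_map]
      have h2 := (ZMod.intCast_zmod_eq_zero_iff_dvd _ q).2 ha.2
      have h3 := Polynomial.hom_eval₂ f (RingHom.id ℤ) (Int.castRingHom (ZMod q)) (a : ℤ)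
      simp only [RingHom.comp_id, eq_intCast, Int.cast_natCast] at h3
      rw [← h3]
      exact h2
    · intro a ha b hb hab
      simp only [Finset.coe_filter, Finset.mem_range, Set.mem_ofPred_eq] at ha hb
      have := (ZMod.natCast_eq_natCast_iff' a b q).1 hab
      rwa [Nat.mod_eq_of_lt ha.1, Nat.mod_eq_of_lt hb.1] at this
  refine h1.trans ((Multiset.toFinset_card_le _).trans ((Polynomial.card_roots' g).trans ?_))
  exact Polynomial.natDegree_map_le

lemma aux_count (f : Polynomial ℤ) (hcont : f.content = 1) (n : ℕ) (hn : 2 ≤ n)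
    (s : Finset ℕ) (hs : ∀ q ∈ s, q.Prime) (hsn : (∏ q ∈ s, q) ^ 2 ≤ n) :
    (((Nat.primesLE n).filter (fun p : ℕ => ∀ q ∈ s, (q : ℤ) ∣ f.eval (p : ℤ))).card : ℝ) ≤
      24 * (n / Real.log n) * ∏ q ∈ s, ((f.natDegree : ℝ) / √(q : ℝ)) := by
  classical
  set Q := ∏ q ∈ s, q with hQ
  have hQpos : 1 ≤ Q := Finset.prod_pos fun q hq => (hs q hq).pos
  set R := (Finset.range Q).filter (fun a : ℕ => ∀ q ∈ s, (q : ℤ) ∣ f.eval (a : ℤ)) with hR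
  have hmod : ∀ (q a : ℕ), (q : ℤ) ∣ f.eval (a : ℤ) ↔ (q : ℤ) ∣ f.eval ((a % q : ℕ) : ℤ) := by
    intro q a
    have h1 : (a : ℤ) - ((a % q : ℕ) : ℤ) ∣ f.eval (a : ℤ) - f.eval ((a % q : ℕ) : ℤ) :=
      Polynomial.sub_dvd_eval_sub _ _ _
    have h2 : (q : ℤ) ∣ (a : ℤ) - ((a % q : ℕ) : ℤ) := by
      push_cast
      exact Int.dvd_self_sub_emod
    exact (dvd_iff_dvd_of_dvd_sub (h2.trans h1))
  have hmodQ : ∀ (q : ℕ), q ∈ s → ∀ a : ℕ, (a % Q) % q = a % q := by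
    intro q hq a
    exact Nat.mod_mod_of_dvd a (Finset.dvd_prod_of_mem _ hq)
  have hRcard : R.card ≤ f.natDegree ^ s.card := by
    have h1 : R.card ≤ (s.pi (fun q => (Finset.range q).filter
        (fun a : ℕ => (q : ℤ) ∣ f.eval (a : ℤ)))).card := by
      apply Finset.card_le_card_of_injOn (fun a : ℕ => fun (q : ℕ) (_ : q ∈ s) => a % q)
      · intro a ha
        rw [hR, Finset.mem_coe, Finset.mem_filter] at ha
        rw [Finset.mem_coe, Finset.mem_pi]
        intro q hq
        rw [Finset.mem_filter, Finset.mem_range]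
        exact ⟨Nat.mod_lt _ (hs q hq).pos, (hmod q a).1 (ha.2 q hq)⟩
      · intro a ha b hb hab
        rw [hR, Finset.mem_coe, Finset.mem_filter, Finset.mem_range] at ha hb
        have h2 : (Q : ℤ) ∣ (b : ℤ) - a := by
          rw [hQ]
          push_cast
          apply Finset.prod_dvd_of_coprime
          · intro p hp q hq hpq
            exact Nat.isCoprime_iff_coprime.2 ((Nat.coprime_primes (hs p hp) (hs q hq)).2 hpq)
          · intro q hq
            have h3 := congrFun (congrFun hab q) hq
            exact (Nat.modEq_iff_dvd).1 h3
        have h4 := (Nat.modEq_iff_dvd).2 h2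
        rw [Nat.ModEq, Nat.mod_eq_of_lt ha.1, Nat.mod_eq_of_lt hb.1] at h4
        exact h4
    refine h1.trans ?_
    rw [Finset.card_pi]
    exact Finset.prod_le_pow_card _ _ _ (fun q hq => aux_roots f hcont q (hs q hq))
  have hsub : (Nat.primesLE n).filter (fun p : ℕ => ∀ q ∈ s, (q : ℤ) ∣ f.eval (p : ℤ)) ⊆
      R.biUnion (fun a => (Nat.primesLE n).filter (fun p => p % Q = a % Q)) := by
    intro p hp
    rw [Finset.mem_filter] at hp
    rw [Finset.mem_biUnion]
    refine ⟨p % Q, ?_, ?_⟩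
    · rw [hR, Finset.mem_filter, Finset.mem_range]
      refine ⟨Nat.mod_lt _ hQpos, ?_⟩
      intro q hq
      rw [hmod, hmodQ q hq, ← hmod]
      exact hp.2 q hq
    · rw [Finset.mem_filter]
      exact ⟨hp.1, (Nat.mod_mod _ _).symm⟩
  have h1 : (((Nat.primesLE n).filter
      (fun p : ℕ => ∀ q ∈ s, (q : ℤ) ∣ f.eval (p : ℤ))).card : ℝ) ≤
      ∑ a ∈ R, (((Nat.primesLE n).filter (fun p => p % Q = a % Q)).card : ℝ) := by
    exact_mod_cast (Finset.card_le_card hsub).trans Finset.card_biUnion_le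
  have hn' : (2 : ℝ) ≤ n := by exact_mod_cast hn
  have hl : 0 < Real.log n := Real.log_pos (by linarith)
  have h2 : ∑ a ∈ R, (((Nat.primesLE n).filter (fun p => p % Q = a % Q)).card : ℝ) ≤
      R.card * (24 * (n / Real.log n) / √(Q : ℝ)) := by
    rw [← nsmul_eq_mul]
    exact Finset.sum_le_card_nsmul _ _ _ (fun a _ => aux_BT n Q a hn hQpos hsn)
  have h3 : (R.card : ℝ) ≤ (f.natDegree : ℝ) ^ s.card := by exact_mod_cast hRcard
  have h4 : √(Q : ℝ) = ∏ q ∈ s, √(q : ℝ) := by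
    rw [hQ]; push_cast
    exact Real.sqrt_prod s (fun q _ => Nat.cast_nonneg q)
  calc _ ≤ _ := h1
    _ ≤ _ := h2
    _ ≤ (f.natDegree : ℝ) ^ s.card * (24 * (n / Real.log n) / √(Q : ℝ)) := by gcongr
    _ = _ := by
      rw [Finset.prod_div_distrib, Finset.prod_const, h4]; ring

lemma aux_moment (f : Polynomial ℤ) (hcont : f.content = 1) :
    ∃ C : ℝ, 0 < C ∧ ∀ n : ℕ, 2 ≤ n → ∀ y : ℝ, 1 ≤ y → ∀ P : Finset ℕ,
      (∀ q ∈ P, q.Prime ∧ y < q) → (∏ q ∈ P, q) ^ 2 ≤ n →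
      ∑ p ∈ Nat.primesLE n, Real.exp (y ^ (1 / 4 : ℝ) *
        ∑ q ∈ P.filter (fun q : ℕ => (q : ℤ) ∣ f.eval (p : ℤ)), 1 / (q : ℝ)) ≤
        C * (Nat.primeCounting n : ℝ) := by
  classical
  set d : ℝ := (f.natDegree : ℝ) with hd
  have hd0 : 0 ≤ d := Nat.cast_nonneg _
  have hsumm : Summable (fun k : ℕ => 1 / (k : ℝ) ^ (5 / 4 : ℝ)) :=
    Real.summable_one_div_nat_rpow.2 (by norm_num)
  set Z := ∑' k : ℕ, 1 / (k : ℝ) ^ (5 / 4 : ℝ) with hZ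
  refine ⟨240 * Real.exp (2 * d * Z), by positivity, ?_⟩
  intro n hn y hy P hP hPn
  set l := y ^ (1 / 4 : ℝ) with hl
  have hl0 : 0 ≤ l := by positivity
  set c : ℕ → ℝ := fun q => Real.exp (l * (1 / (q : ℝ))) - 1 with hc
  have hc0 : ∀ q, 0 ≤ c q := by
    intro q
    have : 0 ≤ l * (1 / (q : ℝ)) := by positivity
    have := Real.add_one_le_exp (l * (1 / (q : ℝ)))
    simp only [hc]; linarith
  have hn' : (2 : ℝ) ≤ n := by exact_mod_cast hn
  have hln : 0 < Real.log n := Real.log_pos (by linarith)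
  have hexp : ∀ p : ℕ, Real.exp (l *
        ∑ q ∈ P.filter (fun q : ℕ => (q : ℤ) ∣ f.eval (p : ℤ)), 1 / (q : ℝ)) =
      ∑ s ∈ P.powerset, if (∀ q ∈ s, (q : ℤ) ∣ f.eval (p : ℤ)) then ∏ q ∈ s, c q else 0 := by
    intro p
    rw [Finset.mul_sum, Real.exp_sum, Finset.prod_filter]
    have : ∀ q ∈ P, (if (q : ℤ) ∣ f.eval (p : ℤ) then Real.exp (l * (1 / (q : ℝ))) else 1) =
        1 + (if (q : ℤ) ∣ f.eval (p : ℤ) then c q else 0) := by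
      intro q _
      split_ifs
      · simp only [hc]; ring
      · ring
    rw [Finset.prod_congr rfl this, Finset.prod_one_add]
    apply Finset.sum_congr rfl
    intro s _
    rw [Finset.prod_ite_zero]
  simp_rw [hexp]
  rw [Finset.sum_comm]
  have hs : ∀ s ∈ P.powerset, (∑ p ∈ Nat.primesLE n,
      if (∀ q ∈ s, (q : ℤ) ∣ f.eval (p : ℤ)) then ∏ q ∈ s, c q else 0) ≤
      24 * (n / Real.log n) * ∏ q ∈ s, (c q * (d / √(q : ℝ))) := by
    intro s hs
    rw [Finset.mem_powerset] at hs
    rw [← Finset.sum_filter, Finset.sum_const, nsmul_eq_mul]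
    have h1 := aux_count f hcont n hn s (fun q hq => (hP q (hs hq)).1) (by
      refine le_trans (Nat.pow_le_pow_left ?_ 2) hPn
      exact Finset.prod_le_prod_of_subset_of_one_le' hs (fun q hq _ => (hP q hq).1.pos))
    have h2 : 0 ≤ ∏ q ∈ s, c q := Finset.prod_nonneg fun q _ => hc0 q
    calc _ ≤ (24 * (n / Real.log n) * ∏ q ∈ s, (d / √(q : ℝ))) * ∏ q ∈ s, c q := by gcongr
      _ = _ := by rw [Finset.prod_mul_distrib]; ring
  refine (Finset.sum_le_sum hs).trans ?_
  rw [← Finset.mul_sum, ← Finset.prod_one_add]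
  have hterm : ∀ q ∈ P, c q * (d / √(q : ℝ)) ≤ 2 * d * (1 / (q : ℝ) ^ (5 / 4 : ℝ)) := by
    intro q hq
    obtain ⟨hqp, hyq⟩ := hP q hq
    have hq0 : (0 : ℝ) < q := by linarith
    have hq1 : (1 : ℝ) ≤ q := by linarith
    have hlq : l ≤ (q : ℝ) ^ (1 / 4 : ℝ) :=
      Real.rpow_le_rpow (by linarith) hyq.le (by norm_num)
    have hlq1 : l * (1 / (q : ℝ)) ≤ 1 := by
      rw [mul_one_div, div_le_one hq0]
      refine hlq.trans ?_
      calc (q : ℝ) ^ (1 / 4 : ℝ) ≤ (q : ℝ) ^ (1 : ℝ) :=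
            Real.rpow_le_rpow_of_exponent_le hq1 (by norm_num)
        _ = q := Real.rpow_one _
    have hnn : 0 ≤ l * (1 / (q : ℝ)) := by positivity
    have h1 : c q ≤ 2 * (l * (1 / (q : ℝ))) := by
      have := Real.abs_exp_sub_one_le (x := l * (1 / (q : ℝ))) (by rwa [abs_of_nonneg hnn])
      rw [abs_of_nonneg hnn] at this
      exact (le_abs_self _).trans this
    have e : (1 / (q : ℝ) ^ (5 / 4 : ℝ)) = (q : ℝ) ^ (1 / 4 : ℝ) * (1 / (q : ℝ)) * (1 / √(q : ℝ)) := by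
      rw [Real.sqrt_eq_rpow, one_div ((q : ℝ) ^ (5 / 4 : ℝ)), one_div (q : ℝ), one_div ((q : ℝ) ^ (1 / 2 : ℝ)),
        ← Real.rpow_neg hq0.le, ← Real.rpow_neg hq0.le, ← Real.rpow_neg_one (q : ℝ),
        ← Real.rpow_add hq0, ← Real.rpow_add hq0]
      norm_num
    calc c q * (d / √(q : ℝ)) ≤ (2 * ((q : ℝ) ^ (1 / 4 : ℝ) * (1 / (q : ℝ)))) * (d / √(q : ℝ)) := by
          apply mul_le_mul_of_nonneg_right _ (by positivity)
          refine h1.trans ?_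
          gcongr
      _ = _ := by rw [e]; ring
  have hprod : ∏ q ∈ P, (1 + c q * (d / √(q : ℝ))) ≤ Real.exp (2 * d * Z) := by
    calc ∏ q ∈ P, (1 + c q * (d / √(q : ℝ)))
        ≤ ∏ q ∈ P, Real.exp (2 * d * (1 / (q : ℝ) ^ (5 / 4 : ℝ))) := by
          apply Finset.prod_le_prod
          · intro q _
            have := hc0 q
            positivity
          · intro q hq
            have := Real.add_one_le_exp (2 * d * (1 / (q : ℝ) ^ (5 / 4 : ℝ)))
            have := hterm q hq
            linarith
      _ = Real.exp (2 * d * ∑ q ∈ P, (1 / (q : ℝ) ^ (5 / 4 : ℝ))) := by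
          rw [← Real.exp_sum, Finset.mul_sum]
      _ ≤ _ := by
          apply Real.exp_le_exp.2
          apply mul_le_mul_of_nonneg_left _ (by positivity)
          exact hsumm.sum_le_tsum P (fun i _ => by positivity)
  have hpi := aux_pi_lower n hn
  calc _ ≤ 24 * (n / Real.log n) * Real.exp (2 * d * Z) := by gcongr
    _ ≤ 24 * (10 * (Nat.primeCounting n : ℝ)) * Real.exp (2 * d * Z) := by
        gcongr; linarith
    _ = _ := by ring

lemma aux_size (f : Polynomial ℤ) : ∃ K : ℝ, 0 ≤ K ∧ ∀ n : ℕ, 2 ≤ n → ∀ p : ℕ, p ≤ n →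
    0 < f.eval (p : ℤ) → Real.log ((f.eval (p : ℤ)).toNat : ℝ) ≤ K * Real.log n := by
  set B : ℝ := 1 + ∑ i ∈ Finset.range (f.natDegree + 1), |(f.coeff i : ℝ)| with hB
  have hB1 : 1 ≤ B := by
    have : 0 ≤ ∑ i ∈ Finset.range (f.natDegree + 1), |(f.coeff i : ℝ)| :=
      Finset.sum_nonneg fun i _ => abs_nonneg _
    linarith
  have hl2 : 0 < Real.log 2 := Real.log_pos (by norm_num)
  refine ⟨Real.log B / Real.log 2 + f.natDegree,
    add_nonneg (div_nonneg (Real.log_nonneg hB1) hl2.le) (Nat.cast_nonneg _), ?_⟩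
  intro n hn p hp hpos
  have hn' : (2 : ℝ) ≤ n := by exact_mod_cast hn
  have hpn : (p : ℝ) ≤ n := by exact_mod_cast hp
  have hcast : ((f.eval (p : ℤ)).toNat : ℝ) = ((f.eval (p : ℤ) : ℤ) : ℝ) := by
    have := Int.toNat_of_nonneg hpos.le
    exact_mod_cast congrArg (fun z : ℤ => (z : ℝ)) this
  have hpos' : (0 : ℝ) < ((f.eval (p : ℤ) : ℤ) : ℝ) := by exact_mod_cast hpos
  rw [hcast]
  have h1 : ((f.eval (p : ℤ) : ℤ) : ℝ) ≤ B * (n : ℝ) ^ f.natDegree := by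
    rw [Polynomial.eval_eq_sum_range]
    push_cast
    calc ∑ i ∈ Finset.range (f.natDegree + 1), (f.coeff i : ℝ) * (p : ℝ) ^ i
        ≤ ∑ i ∈ Finset.range (f.natDegree + 1), |(f.coeff i : ℝ)| * (n : ℝ) ^ f.natDegree := by
          apply Finset.sum_le_sum
          intro i hi
          rw [Finset.mem_range] at hi
          calc (f.coeff i : ℝ) * (p : ℝ) ^ i ≤ |(f.coeff i : ℝ)| * (p : ℝ) ^ i := by
                gcongr; exact le_abs_self _
            _ ≤ |(f.coeff i : ℝ)| * (n : ℝ) ^ i := by gcongr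
            _ ≤ _ := by
                gcongr
                · linarith
                · omega
      _ = (B - 1) * (n : ℝ) ^ f.natDegree := by rw [← Finset.sum_mul, hB]; ring
      _ ≤ _ := by gcongr; linarith
  have h2 := Real.log_le_log hpos' h1
  rw [Real.log_mul (by positivity) (by positivity), Real.log_pow] at h2
  have h3 : Real.log 2 ≤ Real.log n := Real.log_le_log (by norm_num) hn'
  have h4 : Real.log B ≤ Real.log B / Real.log 2 * Real.log n := by
    rw [div_mul_eq_mul_div, le_div_iff₀ hl2]
    exact mul_le_mul_of_nonneg_left h3 (Real.log_nonneg hB1)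
  rw [add_mul]
  linarith

lemma aux_ratio (m : ℕ) (hm : 0 < m) :
    (m : ℝ) / (Nat.totient m : ℝ) = ∏ q ∈ m.primeFactors, ((q : ℝ) / (q - 1)) := by
  have h := Nat.totient_mul_prod_primeFactors m
  have h' : (Nat.totient m : ℝ) * ∏ q ∈ m.primeFactors, (q : ℝ) =
      m * ∏ q ∈ m.primeFactors, ((q : ℝ) - 1) := by
    have h1 := congrArg (fun k : ℕ => (k : ℝ)) h
    push_cast at h1
    rw [h1]
    congr 1
    apply Finset.prod_congr rfl
    intro q hq
    rw [Nat.cast_sub (Nat.prime_of_mem_primeFactors hq).one_lt.le, Nat.cast_one]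
  rw [Finset.prod_div_distrib]
  have h0 : (Nat.totient m : ℝ) ≠ 0 := by
    exact_mod_cast (Nat.totient_pos.2 hm).ne'
  have h2 : ∏ q ∈ m.primeFactors, ((q : ℝ) - 1) ≠ 0 := by
    apply Finset.prod_ne_zero_iff.2
    intro q hq
    have : (1 : ℝ) < q := by exact_mod_cast (Nat.prime_of_mem_primeFactors hq).one_lt
    linarith
  rw [div_eq_div_iff h0 h2, ← h']
  ring

lemma aux_q (q : ℕ) (hq : q.Prime) : (1 : ℝ) ≤ (q : ℝ) / (q - 1) ∧
    (q : ℝ) / (q - 1) ≤ Real.exp (2 * (1 / (q : ℝ))) := by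
  have h2 : (2 : ℝ) ≤ q := by exact_mod_cast hq.two_le
  have h1 : (0 : ℝ) < (q : ℝ) - 1 := by linarith
  constructor
  · rw [le_div_iff₀ h1]; linarith
  · have := Real.add_one_le_exp (2 * (1 / (q : ℝ)))
    refine le_trans ?_ this
    rw [div_le_iff₀ h1]
    have : (2 * (1 / (q : ℝ)) + 1) * ((q : ℝ) - 1) = q + 1 - 2 / q := by field_simp; ring
    rw [this]
    have : 2 / (q : ℝ) ≤ 1 := by rw [div_le_one (by linarith)]; exact h2
    linarith

lemma aux_det (C y K : ℝ) (n m : ℕ) (hn : 2 ≤ n) (hm : 0 < m) (hy : 3 ≤ y)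
    (hC : ∏ q ∈ Nat.primesLE ⌊y⌋₊, ((q : ℝ) / (q - 1)) ≤ C * Real.log y)
    (hK : Real.log m ≤ K * Real.log n)
    (P : Finset ℕ) (hP : P = (Nat.primesLE ⌊Real.log n / 4⌋₊).filter (fun q : ℕ => y < q)) :
    (m : ℝ) / (Nat.totient m : ℝ) ≤ C * Real.log y * Real.exp (8 * K / Real.log 2) *
      Real.exp (2 * ∑ q ∈ P.filter (fun q : ℕ => q ∣ m), 1 / (q : ℝ)) := by
  classical
  rw [aux_ratio m hm]
  have hn' : (2 : ℝ) ≤ n := by exact_mod_cast hn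
  have hln : 0 < Real.log n := Real.log_pos (by linarith)
  have hl2 : 0 < Real.log 2 := Real.log_pos (by norm_num)
  set A := m.primeFactors.filter (fun q : ℕ => (q : ℝ) ≤ y) with hA
  set A' := m.primeFactors.filter (fun q : ℕ => ¬ (q : ℝ) ≤ y) with hA'
  set B := A'.filter (fun q : ℕ => q ≤ ⌊Real.log n / 4⌋₊) with hB
  set D := A'.filter (fun q : ℕ => ¬ q ≤ ⌊Real.log n / 4⌋₊) with hD
  have hpos : ∀ q ∈ m.primeFactors, (0 : ℝ) ≤ (q : ℝ) / (q - 1) := fun q hq =>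
    zero_le_one.trans (aux_q q (Nat.prime_of_mem_primeFactors hq)).1
  rw [← Finset.prod_filter_mul_prod_filter_not m.primeFactors (fun q : ℕ => (q : ℝ) ≤ y),
    ← hA, ← hA', ← Finset.prod_filter_mul_prod_filter_not A' (fun q : ℕ => q ≤ ⌊Real.log n / 4⌋₊),
    ← hB, ← hD]
  have h1 : ∏ q ∈ A, ((q : ℝ) / (q - 1)) ≤ C * Real.log y := by
    refine le_trans ?_ hC
    have hsub : A ⊆ Nat.primesLE ⌊y⌋₊ := by
      intro q hq
      rw [hA, Finset.mem_filter] at hq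
      rw [Nat.mem_primesLE]
      exact ⟨Nat.le_floor hq.2, Nat.prime_of_mem_primeFactors hq.1⟩
    rw [← Finset.prod_sdiff hsub]
    apply le_mul_of_one_le_left
    · exact Finset.prod_nonneg fun q hq => hpos q ((Finset.filter_subset _ _) hq)
    · apply Finset.one_le_prod
      intro q hq
      exact (aux_q q (Nat.prime_of_mem_primesLE (Finset.mem_sdiff.1 hq).1)).1
  have hBeq : B = P.filter (fun q : ℕ => q ∣ m) := by
    ext q
    rw [hB, hA', hP]
    simp only [Finset.mem_filter, Nat.mem_primesLE, Nat.mem_primeFactors, not_le]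
    constructor
    · rintro ⟨⟨⟨a, b, _⟩, c⟩, d⟩; exact ⟨⟨⟨d, a⟩, c⟩, b⟩
    · rintro ⟨⟨⟨d, a⟩, c⟩, b⟩; exact ⟨⟨⟨a, b, hm.ne'⟩, c⟩, d⟩
  have hexp : ∀ S ⊆ m.primeFactors, ∏ q ∈ S, ((q : ℝ) / (q - 1)) ≤
      Real.exp (2 * ∑ q ∈ S, 1 / (q : ℝ)) := by
    intro S hS
    rw [Finset.mul_sum, Real.exp_sum]
    exact Finset.prod_le_prod (fun q hq => hpos q (hS hq))
      (fun q hq => (aux_q q (Nat.prime_of_mem_primeFactors (hS hq))).2)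
  have hA's : A' ⊆ m.primeFactors := Finset.filter_subset _ _
  have hBs : B ⊆ m.primeFactors := (Finset.filter_subset _ _).trans hA's
  have hDs : D ⊆ m.primeFactors := (Finset.filter_subset _ _).trans hA's
  have h2 := hexp B hBs
  have h3 := hexp D hDs
  have hcard : (D.card : ℝ) * Real.log 2 ≤ K * Real.log n := by
    refine le_trans ?_ hK
    have h4 : 2 ^ D.card ≤ m := by
      calc 2 ^ D.card ≤ ∏ q ∈ D, q := by
            apply Finset.pow_card_le_prod
            intro q hq
            exact (Nat.prime_of_mem_primeFactors (hDs hq)).two_le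
        _ ≤ ∏ q ∈ m.primeFactors, q :=
            Finset.prod_le_prod_of_subset_of_one_le' hDs
              (fun q hq _ => (Nat.prime_of_mem_primeFactors hq).pos)
        _ ≤ m := Nat.le_of_dvd hm (Nat.prod_primeFactors_dvd m)
    have h5 : Real.log ((2 : ℝ) ^ D.card) ≤ Real.log m :=
      Real.log_le_log (by positivity) (by exact_mod_cast h4)
    rwa [Real.log_pow] at h5
  have hsumD : ∑ q ∈ D, 1 / (q : ℝ) ≤ D.card * (4 / Real.log n) := by
    rw [← nsmul_eq_mul]
    apply Finset.sum_le_card_nsmul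
    intro q hq
    rw [hD, Finset.mem_filter, not_le] at hq
    have h6 : Real.log n / 4 < q := Nat.lt_of_floor_lt hq.2
    rw [div_le_div_iff₀ (by linarith) hln]
    linarith
  have h7 : 2 * ∑ q ∈ D, 1 / (q : ℝ) ≤ 8 * K / Real.log 2 := by
    have h8 : (D.card : ℝ) ≤ K * Real.log n / Real.log 2 := by
      rw [le_div_iff₀ hl2]; exact hcard
    calc 2 * ∑ q ∈ D, 1 / (q : ℝ) ≤ 2 * ((K * Real.log n / Real.log 2) * (4 / Real.log n)) := by
          refine mul_le_mul_of_nonneg_left (hsumD.trans ?_) (by norm_num)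
          gcongr
      _ = _ := by field_simp; ring
  have h9 : ∏ q ∈ D, ((q : ℝ) / (q - 1)) ≤ Real.exp (8 * K / Real.log 2) :=
    h3.trans (Real.exp_le_exp.2 h7)
  have hA0 : 0 ≤ ∏ q ∈ A, ((q : ℝ) / (q - 1)) :=
    Finset.prod_nonneg fun q hq => hpos q ((Finset.filter_subset _ _) hq)
  have hB0 : 0 ≤ ∏ q ∈ B, ((q : ℝ) / (q - 1)) :=
    Finset.prod_nonneg fun q hq => hpos q (hBs hq)
  have hD0 : 0 ≤ ∏ q ∈ D, ((q : ℝ) / (q - 1)) :=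
    Finset.prod_nonneg fun q hq => hpos q (hDs hq)
  rw [← hBeq]
  calc _ ≤ (C * Real.log y) * (Real.exp (2 * ∑ q ∈ B, 1 / (q : ℝ)) *
        Real.exp (8 * K / Real.log 2)) := by
        apply mul_le_mul h1 _ (mul_nonneg hB0 hD0) (hA0.trans h1)
        exact mul_le_mul h2 h9 hD0 (Real.exp_pos _).le
    _ = _ := by ring

lemma aux_Pprod (n : ℕ) (hn : 2 ≤ n) (y : ℝ) :
    (∏ q ∈ (Nat.primesLE ⌊Real.log n / 4⌋₊).filter (fun q : ℕ => y < q), q) ^ 2 ≤ n := by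
  set k := ⌊Real.log n / 4⌋₊ with hk
  have hn' : (2 : ℝ) ≤ n := by exact_mod_cast hn
  have hln : 0 < Real.log n := Real.log_pos (by linarith)
  have h1 : ∏ q ∈ (Nat.primesLE k).filter (fun q : ℕ => y < q), q ≤ 4 ^ k := by
    refine le_trans ?_ (primorial_le_four_pow k)
    rw [primorial_eq_prod_primesLE]
    exact Finset.prod_le_prod_of_subset_of_one_le' (Finset.filter_subset _ _)
      (fun q hq _ => (Nat.prime_of_mem_primesLE hq).pos)
  refine (Nat.pow_le_pow_left h1 2).trans ?_
  have h2 : (k : ℝ) ≤ Real.log n / 4 := Nat.floor_le (by positivity)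
  have h3 : ((4 : ℝ) ^ k) ^ 2 ≤ n := by
    rw [← Real.log_le_log_iff (by positivity) (by linarith), Real.log_pow, Real.log_pow]
    have : Real.log 4 = 2 * Real.log 2 := by
      rw [show (4 : ℝ) = 2 ^ 2 by norm_num, Real.log_pow]; norm_num
    have := Real.log_two_lt_d9
    have h0 : (0 : ℝ) ≤ k := Nat.cast_nonneg k
    push_cast
    nlinarith
  exact_mod_cast h3

/-- Theorem (Radomskii, Theorem 5, inequality (2)): for a primitive polynomial `f` with
positive leading coefficient mapping primes to positive integers,
`#{p ≤ x : f(p)/φ(f(p)) > t} ≤ c₁ exp(-exp(c₂ t)) π(x)`. -/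
theorem card_totient_ratio_polynomial_prime_gt_le (f : Polynomial ℤ)
    (hlead : 0 < f.leadingCoeff) (hcont : f.content = 1)
    (hpos : ∀ p : ℕ, p.Prime → 0 < f.eval (p : ℤ)) :
    ∃ c₁ c₂ : ℝ, 0 < c₁ ∧ 0 < c₂ ∧ ∀ x : ℝ, 2 ≤ x → ∀ t : ℝ, 0 < t →
      ((((Finset.range (⌊x⌋₊ + 1)).filter Nat.Prime).filter fun p : ℕ =>
          t < ((f.eval (p : ℤ)).toNat : ℝ) / (Nat.totient (f.eval (p : ℤ)).toNat : ℝ)).card : ℝ) ≤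
        c₁ * Real.exp (-Real.exp (c₂ * t)) *
          (((Finset.range (⌊x⌋₊ + 1)).filter Nat.Prime).card : ℝ) := by
  obtain ⟨C, y₀, hC, hy₀, hM⟩ := aux_mertens2
  obtain ⟨K, hK, hsize⟩ := aux_size f
  obtain ⟨E, hE, hmom⟩ := aux_moment f hcont
  set M := C * Real.exp (8 * K / Real.log 2) * Real.exp 2 with hMdef
  have hMpos : 0 < M := by positivity
  set c₂ := 1 / (4 * M) with hc₂
  have hc₂pos : 0 < c₂ := by positivity
  set t₀ := M * Real.log y₀ with ht₀
  refine ⟨E + Real.exp (Real.exp (c₂ * t₀)), c₂, by positivity, hc₂pos, ?_⟩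
  intro x hx t ht
  set n := ⌊x⌋₊ with hn
  have hn2 : 2 ≤ n := Nat.le_floor (by exact_mod_cast hx)
  rw [← Nat.primesLE_eq_filter_range]
  set G := (Nat.primesLE n).filter (fun p : ℕ =>
    t < ((f.eval (p : ℤ)).toNat : ℝ) / (Nat.totient (f.eval (p : ℤ)).toNat : ℝ)) with hG
  by_cases htt : t < t₀
  · have h1 : (G.card : ℝ) ≤ (Nat.primesLE n).card := by
      exact_mod_cast Finset.card_le_card (Finset.filter_subset _ _)
    have h2 : 1 ≤ (E + Real.exp (Real.exp (c₂ * t₀))) * Real.exp (-Real.exp (c₂ * t)) := by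
      calc (1 : ℝ) = Real.exp (Real.exp (c₂ * t)) * Real.exp (-Real.exp (c₂ * t)) := by
            rw [← Real.exp_add]; simp
        _ ≤ _ := by
            gcongr
            have : Real.exp (Real.exp (c₂ * t)) ≤ Real.exp (Real.exp (c₂ * t₀)) := by gcongr
            linarith
    refine h1.trans ?_
    exact le_mul_of_one_le_left (Nat.cast_nonneg _) h2
  · rw [not_lt] at htt
    set y := Real.exp (t / M) with hy
    have hyy : y₀ ≤ y := by
      rw [hy, ← Real.log_le_iff_le_exp (by linarith), le_div_iff₀ hMpos]
      linarith
    have hy3 : 3 ≤ y := hy₀.trans hyy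
    have hlogy : Real.log y = t / M := Real.log_exp _
    set P := (Nat.primesLE ⌊Real.log n / 4⌋₊).filter (fun q : ℕ => y < q) with hP
    have hm := hmom n hn2 y (by linarith) P (by
      intro q hq
      rw [hP, Finset.mem_filter] at hq
      exact ⟨Nat.prime_of_mem_primesLE hq.1, hq.2⟩) (aux_Pprod n hn2 y)
    have hl : y ^ (1 / 4 : ℝ) = Real.exp (c₂ * t) := by
      rw [hy, ← Real.exp_mul, hc₂]
      congr 1; field_simp
    rw [hl] at hm
    set l := Real.exp (c₂ * t) with hldef
    have hlpos : 0 < l := Real.exp_pos _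
    have hbig : ∀ p ∈ G, Real.exp l ≤ Real.exp (l *
        ∑ q ∈ P.filter (fun q : ℕ => (q : ℤ) ∣ f.eval (p : ℤ)), 1 / (q : ℝ)) := by
      intro p hp
      rw [hG, Finset.mem_filter, Nat.mem_primesLE] at hp
      obtain ⟨⟨hpn, hpp⟩, hpt⟩ := hp
      have hfp := hpos p hpp
      have hdet := aux_det C y K n (f.eval (p : ℤ)).toNat hn2 (by omega) hy3 (hM y hyy)
        (hsize n hn2 p hpn hfp) P hP
      have hfil : P.filter (fun q : ℕ => q ∣ (f.eval (p : ℤ)).toNat) =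
          P.filter (fun q : ℕ => (q : ℤ) ∣ f.eval (p : ℤ)) := by
        apply Finset.filter_congr
        intro q _
        rw [← Int.natCast_dvd_natCast, Int.toNat_of_nonneg hfp.le]
      rw [hfil] at hdet
      set S := ∑ q ∈ P.filter (fun q : ℕ => (q : ℤ) ∣ f.eval (p : ℤ)), 1 / (q : ℝ) with hS
      have hlt := lt_of_lt_of_le hpt hdet
      have hS1 : 1 ≤ S := by
        by_contra hcon
        rw [not_le] at hcon
        have h5 : C * Real.log y * Real.exp (8 * K / Real.log 2) * Real.exp (2 * S) ≤
            C * Real.log y * Real.exp (8 * K / Real.log 2) * Real.exp 2 := by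
          have : 0 ≤ Real.log y := Real.log_nonneg (by linarith)
          gcongr
          linarith
        have h6 : C * Real.log y * Real.exp (8 * K / Real.log 2) * Real.exp 2 = t := by
          rw [hlogy]
          calc _ = M * (t / M) := by rw [hMdef]; ring
            _ = t := by field_simp
        linarith
      apply Real.exp_le_exp.2
      exact le_mul_of_one_le_right hlpos.le hS1
    have h7 : (G.card : ℝ) * Real.exp l ≤ E * (Nat.primeCounting n : ℝ) := by
      refine le_trans ?_ hm
      rw [← nsmul_eq_mul]
      refine (Finset.card_nsmul_le_sum G _ _ hbig).trans ?_
      exact Finset.sum_le_sum_of_subset_of_nonneg (Finset.filter_subset _ _)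
        (fun p _ _ => (Real.exp_pos _).le)
    rw [Nat.primesLE_card_eq_primeCounting, Real.exp_neg]
    have h8 : (G.card : ℝ) ≤ E * (Nat.primeCounting n : ℝ) / Real.exp l := by
      rw [le_div_iff₀ (Real.exp_pos l)]; exact h7
    refine h8.trans ?_
    rw [div_eq_mul_inv, mul_right_comm]
    have : E ≤ E + Real.exp (Real.exp (c₂ * t₀)) := by
      have := Real.exp_pos (Real.exp (c₂ * t₀))
      linarith
    gcongr
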